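/- Let r, r̂ : 𝒜 → [0,1], and for u ∈ [0,1] let r_u = (1−u) r + u r̂ and π_u be the unique maximizer of J(·; r_u) over Δ(𝒜). Define F(u) = (η/2) · ( Σ_a (π_u(a)²/π^ref(a)) g(a)² − ( Σ_a (π_u(a)²/π^ref(a)) g(a) )² / Z_u ), where g = r − r̂, Z_u = Σ_a π_u(a)²/π^ref(a), w_u(a) = π_u(a)/π^ref(a), and μ_u(a) = (π_u(a)²/π^ref(a))/Z_u is a probability distribution on 𝒜. Then F is differentiable on (0,1) with F′(u) = −η² Z_u · E_{a∼μ_u}[ w_u(a) ( g(a) − E_{a∼μ_u} g(a) )³ ] for every u ∈ (0,1). -/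

import Mathlib

open Finset

/-- Forward-KL-regularized objective `J(π; g) = ⟨g, π⟩ - η⁻¹ KL(π^ref ‖ π)`
for a bandit with finite action set. -/
noncomputable def J {A : Type*} [Fintype A] (η : ℝ) (pref g p : A → ℝ) : ℝ :=
  ∑ a, g a * p a - η⁻¹ * ∑ a, pref a * Real.log (pref a / p a)

/-- `p` maximizes `J(·; g)` over the simplex `Δ(A)` (on which the objective is `-∞`
unless the policy has full support, so it suffices to compare with full-support
distributions). -/
def IsMaximizer {A : Type*} [Fintype A] (η : ℝ) (pref g p : A → ℝ) : Prop :=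
  (∀ a, 0 ≤ p a) ∧ ∑ a, p a = 1 ∧ (∀ a, 0 < p a) ∧
    ∀ q : A → ℝ, (∀ a, 0 ≤ q a) → ∑ a, q a = 1 → (∀ a, 0 < q a) →
      J η pref g q ≤ J η pref g p

/-! A maximizer of `J(·; r)` satisfies `r + η⁻¹ π^ref / π = λ` for a Lagrange multiplier `λ`.
Subtracting this condition at two rewards shows that the increment of `λ` is a weighted mean of the
increments of the rewards, with weights `π π' / π^ref` made of the old and the new policy. Hence `λ`
is continuous along a continuous path of rewards, then so is the policy, and dividing the same
identity by the time step shows that along a differentiable path `λ` moves with the `μ`-mean of the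
reward velocity `k`, and `π` with velocity `η (π² / π^ref) (k - E_μ k)`. Since `F` is `η / 2` times
the minimum over `c` of `∑ (π² / π^ref) (g - c)²`, attained at `c = E_μ g`, only the weights have to
be differentiated in it. -/

open Filter Topology

section CenterMass

variable {ι α R E : Type*} {l : Filter α} {t : Finset ι}

lemma sum_smul_centerMass [Field R] [AddCommGroup E] [Module R E] {w : ι → R}
    (hw : ∑ i ∈ t, w i ≠ 0) (f : ι → E) :
    (∑ i ∈ t, w i) • t.centerMass w f = ∑ i ∈ t, w i • f i :=
  smul_inv_smul₀ hw _

lemma sum_div_sum_smul_eq_centerMass [Field R] [AddCommGroup E] [Module R E] (w : ι → R)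
    (f : ι → E) : ∑ i ∈ t, (w i / ∑ j ∈ t, w j) • f i = t.centerMass w f := by
  simp only [centerMass, smul_sum, smul_smul, div_eq_inv_mul]

lemma tendsto_centerMass [Field R] [TopologicalSpace R] [IsTopologicalDivisionRing R]
    [AddCommGroup E] [TopologicalSpace E] [ContinuousAdd E] [Module R E] [ContinuousSMul R E]
    {w : α → ι → R} {f : α → ι → E} {w₀ : ι → R} {f₀ : ι → E}
    (hw : ∀ i ∈ t, Tendsto (w · i) l (𝓝 (w₀ i))) (hf : ∀ i ∈ t, Tendsto (f · i) l (𝓝 (f₀ i)))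
    (hw₀ : ∑ i ∈ t, w₀ i ≠ 0) :
    Tendsto (fun v => t.centerMass (w v) (f v)) l (𝓝 (t.centerMass w₀ f₀)) :=
  ((tendsto_finsetSum t hw).inv₀ hw₀).smul
    (tendsto_finsetSum t fun i hi => (hw i hi).smul (hf i hi))

lemma tendsto_centerMass_of_nonneg [SeminormedAddCommGroup E] [NormedSpace ℝ E] {w : α → ι → ℝ}
    {f : α → ι → E} {c : E} (hw : ∀ᶠ v in l, ∀ i ∈ t, 0 ≤ w v i)
    (hw_sum : ∀ᶠ v in l, 0 < ∑ i ∈ t, w v i) (hf : ∀ i ∈ t, Tendsto (f · i) l (𝓝 c)) :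
    Tendsto (fun v => t.centerMass (w v) (f v)) l (𝓝 c) := by
  refine Metric.tendsto_nhds.2 fun ε hε => ?_
  have hball : ∀ᶠ v in l, ∀ i ∈ t, f v i ∈ Metric.ball c ε :=
    (eventually_all_finset t).2 fun i hi => (hf i hi).eventually (Metric.ball_mem_nhds c hε)
  filter_upwards [hw, hw_sum, hball] with v hv hv_sum hfv
  exact (convex_ball c ε).centerMass_mem hv hv_sum hfv

end CenterMass

section Scatter

variable {ι 𝕜 : Type*} [Fintype ι]

/-- The scatter of `f` about its `w`-weighted mean, that is, the total weight times the variance of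
`f` under the normalized weights, in the expanded form in which `F` is given. -/
def scatter [Field 𝕜] (w f : ι → 𝕜) : 𝕜 :=
  ∑ i, w i * f i ^ 2 - (∑ i, w i * f i) ^ 2 / ∑ i, w i

lemma hasDerivAt_scatter [NontriviallyNormedField 𝕜] {w : 𝕜 → ι → 𝕜} {w' : ι → 𝕜} {u : 𝕜}
    (hw : ∀ i, HasDerivAt (w · i) (w' i) u) (hw_sum : ∑ i, w u i ≠ 0) (f : ι → 𝕜) :
    HasDerivAt (fun v => scatter (w v) f)
      (∑ i, w' i * (f i - univ.centerMass (w u) f) ^ 2) u := by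
  have hsum : HasDerivAt (fun v => ∑ i, w v i) (∑ i, w' i) u :=
    HasDerivAt.fun_sum fun i _ => hw i
  have hmoment (h : ι → 𝕜) : HasDerivAt (fun v => ∑ i, w v i * h i) (∑ i, w' i * h i) u :=
    HasDerivAt.fun_sum fun i _ => (hw i).mul_const (h i)
  have hmean : ∑ i, w u i * f i = (∑ i, w u i) * univ.centerMass (w u) f :=
    (sum_smul_centerMass hw_sum f).symm
  have hexpand (c : 𝕜) : ∑ i, w' i * (f i - c) ^ 2 =
      ∑ i, w' i * f i ^ 2 - 2 * c * ∑ i, w' i * f i + c ^ 2 * ∑ i, w' i := by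
    simp only [mul_sum, ← sum_sub_distrib, ← sum_add_distrib]
    exact sum_congr rfl fun i _ => by ring
  refine ((hmoment fun i => f i ^ 2).sub
    (((hmoment f).fun_pow 2).fun_div hsum hw_sum)).congr_deriv ?_
  rw [hmean, hexpand]
  field_simp
  ring

end Scatter

section FirstOrderCondition

variable {A : Type*} [Fintype A] {η : ℝ} {pref g p : A → ℝ}

/-- The partial derivative of `J(·; g)` at `p` with respect to the probability of `a`. -/
noncomputable def marginalValue (η : ℝ) (pref g p : A → ℝ) (a : A) : ℝ :=
  g a + η⁻¹ * (pref a / p a)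

/-- The mean marginal value under `p`. At a maximizer it is the Lagrange multiplier of the
constraint `∑ a, p a = 1`; this formula makes it a function of the policy. -/
noncomputable def multiplier (η : ℝ) (pref g p : A → ℝ) : ℝ :=
  ∑ a, p a * marginalValue η pref g p a

lemma hasDerivAt_J_add_smul (hp : ∀ a, p a ≠ 0) (d : A → ℝ) :
    HasDerivAt (fun t : ℝ => J η pref g (p + t • d)) (∑ a, marginalValue η pref g p a * d a) 0 := by
  have hline (a : A) : HasDerivAt (fun t : ℝ => (p + t • d) a) (d a) 0 := by
    simpa using ((hasDerivAt_id (0 : ℝ)).mul_const (d a)).const_add (p a)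
  have hlog (a : A) : HasDerivAt (fun t : ℝ => pref a * Real.log (pref a / (p + t • d) a))
      (-(pref a / p a * d a)) 0 := by
    rcases eq_or_ne (pref a) 0 with hpref | hpref
    · simpa [hpref] using hasDerivAt_const (0 : ℝ) (0 : ℝ)
    · have hpa := hp a
      refine ((((hasDerivAt_const (0 : ℝ) (pref a)).fun_div (hline a) (by simpa using hpa)).log
        (by simp [hpa, hpref])).const_mul (pref a)).congr_deriv ?_
      simp only [zero_smul, add_zero]
      field_simp
      ring
  refine ((HasDerivAt.fun_sum fun a _ => (hline a).const_mul (g a)).sub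
    ((HasDerivAt.fun_sum fun a _ => hlog a).const_mul η⁻¹)).congr_deriv ?_
  simp only [marginalValue, mul_sum, ← sum_sub_distrib]
  exact sum_congr rfl fun a _ => by ring

namespace IsMaximizer

lemma sum_eq_one (h : IsMaximizer η pref g p) : ∑ a, p a = 1 := h.2.1

lemma pos (h : IsMaximizer η pref g p) (a : A) : 0 < p a := h.2.2.1 a

lemma sum_marginalValue_mul_eq_zero (h : IsMaximizer η pref g p) {d : A → ℝ}
    (hd : ∑ a, d a = 0) : ∑ a, marginalValue η pref g p a * d a = 0 := by
  have hpos : ∀ᶠ t : ℝ in 𝓝 0, ∀ a, 0 < (p + t • d) a := by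
    refine eventually_all.2 fun a => ?_
    have hcont : ContinuousAt (fun t : ℝ => p a + t * d a) 0 := by fun_prop
    exact hcont.eventually (lt_mem_nhds (by simpa using h.pos a))
  have hmax : IsLocalMax (fun t : ℝ => J η pref g (p + t • d)) 0 := by
    filter_upwards [hpos] with t ht
    have hsum : ∑ a, (p + t • d) a = 1 := by
      simp [sum_add_distrib, ← mul_sum, hd, h.sum_eq_one]
    simpa using h.2.2.2 _ (fun a => (ht a).le) hsum ht
  exact hmax.hasDerivAt_eq_zero (hasDerivAt_J_add_smul (fun a => (h.pos a).ne') d)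

lemma marginalValue_eq_multiplier (h : IsMaximizer η pref g p) (a : A) :
    marginalValue η pref g p a = multiplier η pref g p := by
  set c := marginalValue η pref g p
  set m := multiplier η pref g p
  have hd : ∑ a, p a * (c a - m) = 0 := by
    simp only [mul_sub, sum_sub_distrib, ← sum_mul, h.sum_eq_one, one_mul]
    exact sub_self m
  have hvar : ∑ a, p a * (c a - m) ^ 2 = 0 := calc
    ∑ a, p a * (c a - m) ^ 2 = ∑ a, c a * (p a * (c a - m)) - m * ∑ a, p a * (c a - m) := by
      rw [mul_sum, ← sum_sub_distrib]
      exact sum_congr rfl fun a _ => by ring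
    _ = 0 := by rw [h.sum_marginalValue_mul_eq_zero hd, hd, mul_zero, sub_zero]
  have hterm := (sum_eq_zero_iff_of_nonneg
    fun a _ => mul_nonneg (h.pos a).le (sq_nonneg (c a - m))).1 hvar a (mem_univ a)
  exact sub_eq_zero.1 (pow_eq_zero_iff two_ne_zero |>.1
    ((mul_eq_zero.1 hterm).resolve_left (h.pos a).ne'))

lemma div_eq_mul_multiplier_sub (h : IsMaximizer η pref g p) (hη : η ≠ 0) (a : A) :
    pref a / p a = η * (multiplier η pref g p - g a) := by
  rw [← h.marginalValue_eq_multiplier a, marginalValue, add_sub_cancel_left,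
    mul_inv_cancel_left₀ hη]

lemma mul_multiplier_sub_ne_zero (h : IsMaximizer η pref g p) (hη : η ≠ 0) {a : A}
    (hpref : pref a ≠ 0) : η * (multiplier η pref g p - g a) ≠ 0 := by
  rw [← h.div_eq_mul_multiplier_sub hη a]
  exact div_ne_zero hpref (h.pos a).ne'

lemma eq_div_mul_multiplier_sub (h : IsMaximizer η pref g p) (hη : η ≠ 0) {a : A}
    (hpref : pref a ≠ 0) : p a = pref a / (η * (multiplier η pref g p - g a)) := by
  rw [← h.div_eq_mul_multiplier_sub hη a, div_div_cancel₀ hpref]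

end IsMaximizer

end FirstOrderCondition

namespace IsMaximizer

section Increments

variable {A : Type*} [Fintype A] {η : ℝ} {pref g g' p p' : A → ℝ}

lemma sum_mul_div_pos (h : IsMaximizer η pref g p) (h' : IsMaximizer η pref g' p')
    (hpref : ∀ a, 0 < pref a) : 0 < ∑ a, p a * p' a / pref a :=
  sum_pos (fun a _ => div_pos (mul_pos (h.pos a) (h'.pos a)) (hpref a))
    (nonempty_of_sum_ne_zero (h.sum_eq_one.trans_ne one_ne_zero))

lemma sum_sq_div_pos (h : IsMaximizer η pref g p) (hpref : ∀ a, 0 < pref a) :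
    0 < ∑ a, p a ^ 2 / pref a := by
  simpa only [sq] using h.sum_mul_div_pos h hpref

lemma sub_eq_mul_sub_multiplier_sub (h : IsMaximizer η pref g p) (h' : IsMaximizer η pref g' p')
    (hη : η ≠ 0) {a : A} (hpref : pref a ≠ 0) :
    p' a - p a = η * (p a * p' a / pref a *
      ((g' a - g a) - (multiplier η pref g' p' - multiplier η pref g p))) := by
  have hp := (h.pos a).ne'
  have hp' := (h'.pos a).ne'
  have hfoc := h.div_eq_mul_multiplier_sub hη a
  have hfoc' := h'.div_eq_mul_multiplier_sub hη a
  calc p' a - p a = p a * p' a / pref a * (pref a / p a - pref a / p' a) := by field_simp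
    _ = _ := by rw [hfoc, hfoc']; ring

lemma multiplier_sub_eq_centerMass (h : IsMaximizer η pref g p) (h' : IsMaximizer η pref g' p')
    (hη : η ≠ 0) (hpref : ∀ a, 0 < pref a) :
    multiplier η pref g' p' - multiplier η pref g p =
      univ.centerMass (fun a => p a * p' a / pref a) (fun a => g' a - g a) := by
  have hsum : ∑ a, (p' a - p a) = 0 := by
    rw [sum_sub_distrib, h.sum_eq_one, h'.sum_eq_one, sub_self]
  simp only [h.sub_eq_mul_sub_multiplier_sub h' hη (hpref _).ne', ← mul_sum, mul_sub _ (g' _ - g _),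
    sum_sub_distrib, ← sum_mul] at hsum
  have hbalance := sub_eq_zero.1 ((mul_eq_zero.1 hsum).resolve_left hη)
  simp only [centerMass, smul_eq_mul, hbalance]
  rw [inv_mul_cancel_left₀ (h.sum_mul_div_pos h' hpref).ne']

end Increments

section Path

variable {A : Type*} [Fintype A] {η : ℝ} {pref k : A → ℝ} {ρ π : ℝ → A → ℝ} {u : ℝ}

lemma continuousAt_multiplier (hη : η ≠ 0) (hpref : ∀ a, 0 < pref a)
    (hρ : ∀ a, ContinuousAt (ρ · a) u) (hπ : ∀ᶠ v in 𝓝 u, IsMaximizer η pref (ρ v) (π v)) :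
    ContinuousAt (fun v => multiplier η pref (ρ v) (π v)) u := by
  have hu := hπ.self_of_nhds
  have hmean : Tendsto (fun v => univ.centerMass (fun a => π u a * π v a / pref a)
      (fun a => ρ v a - ρ u a)) (𝓝 u) (𝓝 0) := by
    refine tendsto_centerMass_of_nonneg ?_ ?_
      fun a _ => tendsto_sub_nhds_zero_iff.2 (hρ a).tendsto
    · filter_upwards [hπ] with v hv a _
      exact (div_pos (mul_pos (hu.pos a) (hv.pos a)) (hpref a)).le
    · filter_upwards [hπ] with v hv using hu.sum_mul_div_pos hv hpref
  refine tendsto_sub_nhds_zero_iff.1 (hmean.congr' ?_)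
  filter_upwards [hπ] with v hv using (hu.multiplier_sub_eq_centerMass hv hη hpref).symm

lemma eventuallyEq_div_mul_multiplier_sub (hη : η ≠ 0) (hpref : ∀ a, 0 < pref a)
    (hπ : ∀ᶠ v in 𝓝 u, IsMaximizer η pref (ρ v) (π v)) (a : A) :
    (π · a) =ᶠ[𝓝 u] fun v => pref a / (η * (multiplier η pref (ρ v) (π v) - ρ v a)) :=
  hπ.mono fun _ hv => hv.eq_div_mul_multiplier_sub hη (hpref a).ne'

lemma continuousAt_policy (hη : η ≠ 0) (hpref : ∀ a, 0 < pref a)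
    (hρ : ∀ a, ContinuousAt (ρ · a) u) (hπ : ∀ᶠ v in 𝓝 u, IsMaximizer η pref (ρ v) (π v)) (a : A) :
    ContinuousAt (π · a) u :=
  (continuousAt_const.div
    (continuousAt_const.mul ((continuousAt_multiplier hη hpref hρ hπ).sub (hρ a)))
    (hπ.self_of_nhds.mul_multiplier_sub_ne_zero hη (hpref a).ne')).congr
    (eventuallyEq_div_mul_multiplier_sub hη hpref hπ a).symm

lemma hasDerivAt_multiplier (hη : η ≠ 0) (hpref : ∀ a, 0 < pref a)
    (hρ : ∀ a, HasDerivAt (ρ · a) (k a) u) (hπ : ∀ᶠ v in 𝓝 u, IsMaximizer η pref (ρ v) (π v)) :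
    HasDerivAt (fun v => multiplier η pref (ρ v) (π v))
      (univ.centerMass (fun a => π u a ^ 2 / pref a) k) u := by
  have hu := hπ.self_of_nhds
  have hweight (a : A) :
      Tendsto (fun v => π u a * π v a / pref a) (𝓝[≠] u) (𝓝 (π u a ^ 2 / pref a)) := by
    have hcont := continuousAt_policy hη hpref (fun a => (hρ a).continuousAt) hπ a
    simpa only [sq] using ((hcont.tendsto.const_mul (π u a)).div_const (pref a)).mono_left
      nhdsWithin_le_nhds
  have hZ : ∑ a, π u a ^ 2 / pref a ≠ 0 := (hu.sum_sq_div_pos hpref).ne'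
  rw [hasDerivAt_iff_tendsto_slope]
  refine (tendsto_centerMass (fun a _ => hweight a) (fun a _ => (hρ a).tendsto_slope) hZ).congr' ?_
  filter_upwards [nhdsWithin_le_nhds hπ] with v hv
  rw [slope, vsub_eq_sub, hu.multiplier_sub_eq_centerMass hv hη hpref, ← centerMass_smul]
  rfl

lemma hasDerivAt_policy (hη : η ≠ 0) (hpref : ∀ a, 0 < pref a)
    (hρ : ∀ a, HasDerivAt (ρ · a) (k a) u) (hπ : ∀ᶠ v in 𝓝 u, IsMaximizer η pref (ρ v) (π v))
    (a : A) :
    HasDerivAt (π · a) (η * (π u a ^ 2 / pref a *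
      (k a - univ.centerMass (fun b => π u b ^ 2 / pref b) k))) u := by
  have hu := hπ.self_of_nhds
  refine (((hasDerivAt_const u (pref a)).fun_div
    (((hasDerivAt_multiplier hη hpref hρ hπ).sub (hρ a)).const_mul η)
    (hu.mul_multiplier_sub_ne_zero hη (hpref a).ne')).congr_of_eventuallyEq
    (eventuallyEq_div_mul_multiplier_sub hη hpref hπ a)).congr_deriv ?_
  have hprefa := (hpref a).ne'
  have hpa := (hu.pos a).ne'
  simp only [Pi.sub_apply, ← hu.div_eq_mul_multiplier_sub hη a]
  field_simp
  ring

lemma hasDerivAt_scatter_sq_div (hη : η ≠ 0) (hpref : ∀ a, 0 < pref a)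
    (hρ : ∀ a, HasDerivAt (ρ · a) (k a) u) (hπ : ∀ᶠ v in 𝓝 u, IsMaximizer η pref (ρ v) (π v))
    (f : A → ℝ) :
    HasDerivAt (fun v => scatter (fun a => π v a ^ 2 / pref a) f)
      (2 * η * ∑ a, π u a ^ 2 / pref a * (π u a / pref a *
        ((k a - univ.centerMass (fun b => π u b ^ 2 / pref b) k) *
          (f a - univ.centerMass (fun b => π u b ^ 2 / pref b) f) ^ 2))) u := by
  have hu := hπ.self_of_nhds
  have hZ : ∑ a, π u a ^ 2 / pref a ≠ 0 := (hu.sum_sq_div_pos hpref).ne'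
  refine (hasDerivAt_scatter (fun a => ((hasDerivAt_policy hη hpref hρ hπ a).fun_pow 2).div_const
    (pref a)) hZ f).congr_deriv ?_
  rw [mul_sum]
  exact sum_congr rfl fun a _ => by ring

end Path

end IsMaximizer

theorem stmt3_general {A : Type*} [Fintype A] {η : ℝ} (hη : η ≠ 0) {pref : A → ℝ}
    (hpref : ∀ a, 0 < pref a) {g : A → ℝ} {ρ π : ℝ → A → ℝ} {u : ℝ}
    (hρ : ∀ a, HasDerivAt (ρ · a) (-g a) u)
    (hπ : ∀ᶠ v in 𝓝 u, IsMaximizer η pref (ρ v) (π v)) :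
    HasDerivAt
      (fun v => η / 2 * ((∑ a, π v a ^ 2 / pref a * g a ^ 2) -
        (∑ a, π v a ^ 2 / pref a * g a) ^ 2 / (∑ a, π v a ^ 2 / pref a)))
      (-η ^ 2 * (∑ a, π u a ^ 2 / pref a) *
        ∑ a, (π u a ^ 2 / pref a / (∑ b, π u b ^ 2 / pref b)) *
          (π u a / pref a *
            (g a - ∑ b, (π u b ^ 2 / pref b / (∑ b', π u b' ^ 2 / pref b')) * g b) ^ 3)) u := by
  have hu := hπ.self_of_nhds
  have hZ : ∑ a, π u a ^ 2 / pref a ≠ 0 := (hu.sum_sq_div_pos hpref).ne'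
  have hneg : univ.centerMass (fun a => π u a ^ 2 / pref a) (fun a => -g a) =
      -univ.centerMass (fun a => π u a ^ 2 / pref a) g := by
    simp only [centerMass, smul_neg, sum_neg_distrib]
  refine ((IsMaximizer.hasDerivAt_scatter_sq_div hη hpref hρ hπ g).const_mul (η / 2)).congr_deriv ?_
  simp only [← smul_eq_mul (_ / ∑ b, π u b ^ 2 / pref b), sum_div_sum_smul_eq_centerMass]
  rw [mul_assoc (-η ^ 2), ← smul_eq_mul (∑ a, π u a ^ 2 / pref a), sum_smul_centerMass hZ, hneg]
  simp only [smul_eq_mul, mul_sum]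
  exact sum_congr rfl fun a _ => by ring

/-- Derivative of the mean-value remainder `F(u)` along the reward
interpolation `r_u = (1-u) r + u r̂`, where `π_u` is the (unique) maximizer of
`J(·; r_u)`:  `F′(u) = -η² Z_u · E_{a∼μ_u}[ w_u(a) (g(a) - E_{μ_u} g)³ ]`. -/
theorem stmt3 {A : Type*} [Fintype A]
    (η : ℝ) (hη : 0 < η)
    (pref : A → ℝ) (hpref : ∀ a, 0 < pref a) (hprefsum : ∑ a, pref a = 1)
    (r rhat : A → ℝ)
    (hr : ∀ a, r a ∈ Set.Icc (0 : ℝ) 1) (hrhat : ∀ a, rhat a ∈ Set.Icc (0 : ℝ) 1)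
    (π : ℝ → A → ℝ)
    (hπ : ∀ u ∈ Set.Icc (0 : ℝ) 1,
      IsMaximizer η pref (fun a => (1 - u) * r a + u * rhat a) (π u)) :
    ∀ u ∈ Set.Ioo (0 : ℝ) 1,
      HasDerivAt
        (fun u' => η / 2 * ((∑ a, (π u' a) ^ 2 / pref a * (r a - rhat a) ^ 2) -
          (∑ a, (π u' a) ^ 2 / pref a * (r a - rhat a)) ^ 2 /
            (∑ a, (π u' a) ^ 2 / pref a)))
        (-η ^ 2 * (∑ a, (π u a) ^ 2 / pref a) *
          ∑ a, ((π u a) ^ 2 / pref a / (∑ b, (π u b) ^ 2 / pref b)) *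
            ((π u a / pref a) *
              ((r a - rhat a) -
                ∑ b, ((π u b) ^ 2 / pref b / (∑ b', (π u b') ^ 2 / pref b')) *
                  (r b - rhat b)) ^ 3))
        u := by
  intro u hu
  refine stmt3_general hη.ne' hpref (ρ := fun v a => (1 - v) * r a + v * rhat a) (fun a => ?_)
    (mem_of_superset (Icc_mem_nhds hu.1 hu.2) hπ)
  exact ((((hasDerivAt_id' u).const_sub 1).mul_const (r a)).fun_add
    ((hasDerivAt_id' u).mul_const (rhat a))).congr_deriv (by ring)
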